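/- arXiv:2602.18808 — 2 statements merged into one kernel-verified Lean document; each statement's English description precedes it below -/
import Mathlib

section
/- Let S be a random grouplike element of the tensor series space over ℝ^d (i.e., S satisfies the shuffle identity ⟨u, S⟩⟨v, S⟩ = ⟨u ⧢ v, S⟩ for all u, v in the shuffle algebra). Then for every integer p ≥ 1 and every k ≥ 0, E‖S^k‖^{2p} ≤ d^{k(2p−1)} (2p)^{2pk} ‖E S^{2pk}‖, where ‖·‖ denotes the projective tensor norm built from the ℓ¹ norm on ℝ^d. -/
open MeasureTheory
open scoped ENNReal

/- **Statement 5.**  We model tensor series over `ℝ^d` by their coordinates on the word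
basis: a tensor series is a function `S : List (Fin d) → ℝ`, with `⟨w, S⟩ = S w`.  The
degree-`k` component `S^k` is the restriction to words of length `k`, and its norm (the
projective tensor norm built from the ℓ¹ norm on `ℝ^d`) is `‖S^k‖ = Σ_{|w|=k} |S w|`. -/

/-- The shuffle product of two words, as an element of the shuffle algebra (a finitely
supported linear combination of words). -/
noncomputable def shuffle {d : ℕ} : List (Fin d) → List (Fin d) → (List (Fin d) →₀ ℝ)
  | [], v => Finsupp.single v 1
  | u, [] => Finsupp.single u 1
  | a :: u, b :: v =>
      Finsupp.mapDomain (a :: ·) (shuffle u (b :: v)) +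
      Finsupp.mapDomain (b :: ·) (shuffle (a :: u) v)
termination_by u v => u.length + v.length

/-- `S` is grouplike: it satisfies the shuffle identity `⟨u,S⟩⟨v,S⟩ = ⟨u ⧢ v, S⟩`. -/
def Grouplike {d : ℕ} (S : List (Fin d) → ℝ) : Prop :=
  ∀ u v : List (Fin d), S u * S v = (shuffle u v).sum fun w c => c * S w

/-- The ℓ¹/projective norm of the degree-`k` component of a tensor series. -/
noncomputable def normk (d k : ℕ) (S : List (Fin d) → ℝ) : ℝ :=
  ∑ f : Fin k → Fin d, |S (List.ofFn f)|

namespace GMB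

/-- All ways to split a word in two complementary subwords. -/
def splits {d : ℕ} : List (Fin d) → List (List (Fin d) × List (Fin d))
  | [] => [([], [])]
  | c :: x => (splits x).map (fun q => (c :: q.1, q.2)) ++
      (splits x).map (fun q => (q.1, c :: q.2))

lemma cons_inj {d : ℕ} (a : Fin d) : Function.Injective (fun l : List (Fin d) => a :: l) :=
  fun _ _ h => (List.cons.inj h).2

lemma mapDomain_nil {d : ℕ} (a : Fin d) (f : List (Fin d) →₀ ℝ) :
    Finsupp.mapDomain (a :: ·) f [] = 0 := by
  apply Finsupp.mapDomain_of_notMem_range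
  simp

lemma mapDomain_cons {d : ℕ} (a c : Fin d) (x : List (Fin d)) (f : List (Fin d) →₀ ℝ) :
    Finsupp.mapDomain (a :: ·) f (c :: x) = if a = c then f x else 0 := by
  split_ifs with h
  · subst h
    exact Finsupp.mapDomain_apply (cons_inj a) f x
  · apply Finsupp.mapDomain_of_notMem_range
    rintro ⟨y, hy⟩
    exact h (List.cons.inj hy).1

lemma splits_len {d : ℕ} (x : List (Fin d)) :
    ∀ q ∈ splits x, q.1.length + q.2.length = x.length := by
  induction x with
  | nil => simp [splits]
  | cons c x ih =>
    intro q hq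
    simp only [splits, List.mem_append, List.mem_map] at hq
    rcases hq with ⟨r, hr, rfl⟩ | ⟨r, hr, rfl⟩
    · have := ih r hr
      simp only [List.length_cons]; omega
    · have := ih r hr
      simp only [List.length_cons]; omega

lemma countP_cons_left {d : ℕ} (c : Fin d) (u v : List (Fin d))
    (L : List (List (Fin d) × List (Fin d))) :
    (L.map (fun q => (c :: q.1, q.2))).count (u, v) =
      match u with
      | [] => 0
      | a :: u' => if a = c then L.count (u', v) else 0 := by
  induction L with
  | nil => cases u <;> simp
  | cons q L ih =>
    obtain ⟨q1, q2⟩ := q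
    cases u with
    | nil => simpa [List.count_cons] using ih
    | cons a u' =>
      simp only [List.map_cons, List.count_cons, ih, beq_iff_eq, Prod.mk.injEq, List.cons.injEq]
      grind

lemma countP_cons_right {d : ℕ} (c : Fin d) (u v : List (Fin d))
    (L : List (List (Fin d) × List (Fin d))) :
    (L.map (fun q => (q.1, c :: q.2))).count (u, v) =
      match v with
      | [] => 0
      | a :: v' => if a = c then L.count (u, v') else 0 := by
  induction L with
  | nil => cases v <;> simp
  | cons q L ih =>
    obtain ⟨q1, q2⟩ := q
    cases v with
    | nil => simpa [List.count_cons] using ih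
    | cons a v' =>
      simp only [List.map_cons, List.count_cons, ih, beq_iff_eq, Prod.mk.injEq, List.cons.injEq]
      grind

lemma shuffle_nil_left {d : ℕ} (v : List (Fin d)) : shuffle [] v = Finsupp.single v 1 := by
  rw [shuffle]

lemma shuffle_nil_right {d : ℕ} (v : List (Fin d)) : shuffle v [] = Finsupp.single v 1 := by
  cases v <;> rw [shuffle]
  simp

lemma shuffle_cons {d : ℕ} (a b : Fin d) (u v : List (Fin d)) :
    shuffle (a :: u) (b :: v) = Finsupp.mapDomain (a :: ·) (shuffle u (b :: v)) +
      Finsupp.mapDomain (b :: ·) (shuffle (a :: u) v) := by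
  rw [shuffle]

lemma shuffle_apply {d : ℕ} (x : List (Fin d)) : ∀ u v : List (Fin d),
    shuffle u v x = ((splits x).count (u, v) : ℝ) := by
  induction x with
  | nil =>
    intro u v
    rcases u with _ | ⟨a, u⟩ <;> rcases v with _ | ⟨b, v⟩ <;>
      simp [shuffle_nil_left, shuffle_nil_right, shuffle_cons, splits, mapDomain_nil,
        Finsupp.single_apply]
  | cons c x ih =>
    intro u v
    rw [splits, List.count_append, countP_cons_left, countP_cons_right]
    rcases u with _ | ⟨a, u⟩ <;> rcases v with _ | ⟨b, v⟩
    · simp [shuffle_nil_left]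
    · have := ih [] v
      rw [shuffle_nil_left, Finsupp.single_apply] at this
      simp only [shuffle_nil_left, Finsupp.single_apply, List.cons.injEq]
      by_cases h : b = c <;> simp [h, ← this]
    · have := ih u []
      rw [shuffle_nil_right, Finsupp.single_apply] at this
      simp only [shuffle_nil_right, Finsupp.single_apply, List.cons.injEq]
      by_cases h : a = c <;> simp [h, ← this]
    · rw [shuffle_cons, Finsupp.add_apply, mapDomain_cons, mapDomain_cons, ih, ih]
      push_cast
      rfl

lemma splits_weight {d : ℕ} (n : ℝ) (x : List (Fin d)) :
    ((splits x).map (fun q => n ^ q.1.length)).sum = (n + 1) ^ x.length := by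
  induction x with
  | nil => simp [splits]
  | cons c x ih =>
    have h1 : ((splits x).map (fun q => n ^ (q.1.length + 1))).sum =
        n * (n + 1) ^ x.length := by
      rw [← ih, ← List.sum_map_mul_left]
      simp only [pow_succ']
    simp only [splits, List.map_append, List.map_map, List.sum_append, Function.comp_def,
      List.length_cons]
    rw [h1, ih]
    ring

lemma sum_count_le {α : Type*} [DecidableEq α] [BEq α] [LawfulBEq α] (Q : Finset α) (f : α → ℝ) (hf : ∀ a, 0 ≤ f a)
    (L : List α) : ∑ q ∈ Q, f q * (L.count q : ℝ) ≤ (L.map f).sum := by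
  induction L with
  | nil => simp
  | cons a L ih =>
    simp only [List.count_cons, List.map_cons, List.sum_cons, beq_iff_eq]
    push_cast
    simp only [mul_add, Finset.sum_add_distrib]
    have : ∑ q ∈ Q, f q * (if a = q then (1 : ℝ) else 0) ≤ f a := by
      simp only [mul_ite, mul_one, mul_zero, Finset.sum_ite_eq]
      split_ifs
      · exact le_rfl
      · exact hf a
    linarith

/-- `spow w n` is the shuffle power of `w` of exponent `n + 1`. -/
noncomputable def spow {d : ℕ} (w : List (Fin d)) : ℕ → (List (Fin d) →₀ ℝ)
  | 0 => Finsupp.single w 1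
  | n + 1 => Finsupp.linearCombination ℝ (fun u => shuffle u w) (spow w n)

lemma spow_succ_apply {d : ℕ} (w x : List (Fin d)) (n : ℕ) :
    spow w (n + 1) x = ∑ u ∈ (spow w n).support, spow w n u * shuffle u w x := by
  rw [spow, Finsupp.linearCombination_apply, Finsupp.sum, Finsupp.finsetSum_apply]
  simp

lemma spow_nonneg {d : ℕ} (w : List (Fin d)) (n : ℕ) : ∀ x, 0 ≤ spow w n x := by
  induction n with
  | zero =>
    intro x
    rw [spow, Finsupp.single_apply]
    split_ifs <;> norm_num
  | succ n ih =>
    intro x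
    rw [spow_succ_apply]
    refine Finset.sum_nonneg fun u _ => mul_nonneg (ih u) ?_
    rw [shuffle_apply]
    positivity

lemma spow_len {d : ℕ} (w : List (Fin d)) (n : ℕ) :
    ∀ x, spow w n x ≠ 0 → x.length = (n + 1) * w.length := by
  induction n with
  | zero =>
    intro x hx
    rw [spow, Finsupp.single_apply] at hx
    have : w = x := by by_contra h; simp [h] at hx
    simp [this]
  | succ n ih =>
    intro x hx
    rw [spow_succ_apply] at hx
    obtain ⟨u, -, hu⟩ := Finset.exists_ne_zero_of_sum_ne_zero hx
    have h1 := ih u (left_ne_zero_of_mul hu)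
    have h2 := right_ne_zero_of_mul hu
    rw [shuffle_apply, Nat.cast_ne_zero] at h2
    have h3 := splits_len x _ (List.count_pos_iff.1 (Nat.pos_of_ne_zero h2))
    simp only at h3
    rw [← h3, h1]
    ring

lemma spow_sum_le {d : ℕ} (n : ℕ) : ∀ (W : Finset (List (Fin d))) (x : List (Fin d)),
    ∑ w ∈ W, spow w n x ≤ ((n + 1 : ℕ) : ℝ) ^ x.length := by
  induction n with
  | zero =>
    intro W x
    simp only [spow, Finsupp.single_apply]
    rw [Finset.sum_ite_eq']
    split_ifs <;> simp
  | succ n ih =>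
    intro W x
    classical
    have hpt : ∀ w u : List (Fin d), spow w n u ≤ ((n + 1 : ℕ) : ℝ) ^ u.length := by
      intro w u
      simpa using ih {w} u
    set U : Finset (List (Fin d)) := W.biUnion fun w => (spow w n).support with hU
    have h1 : ∀ w ∈ W, spow w (n + 1) x ≤
        ∑ u ∈ U, ((n + 1 : ℕ) : ℝ) ^ u.length * ((splits x).count (u, w) : ℝ) := by
      intro w hw
      rw [spow_succ_apply]
      refine (Finset.sum_le_sum (g := fun u =>
        ((n + 1 : ℕ) : ℝ) ^ u.length * ((splits x).count (u, w) : ℝ)) ?_).trans ?_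
      · intro u _
        rw [shuffle_apply]
        exact mul_le_mul_of_nonneg_right (hpt w u) (by positivity)
      · refine Finset.sum_le_sum_of_subset_of_nonneg ?_ ?_
        · exact Finset.subset_biUnion_of_mem (fun w => (spow w n).support) hw
        · intros; positivity
    refine (Finset.sum_le_sum h1).trans ?_
    rw [Finset.sum_comm, ← Finset.sum_product (s := U) (t := W)
      (f := fun q => ((n + 1 : ℕ) : ℝ) ^ q.1.length * ((splits x).count q : ℝ))]
    refine (sum_count_le (U ×ˢ W) (fun q => ((n + 1 : ℕ) : ℝ) ^ q.1.length)
      (fun _ => by positivity) (splits x)).trans ?_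
    rw [splits_weight]
    push_cast
    exact le_rfl

lemma pow_eq {d : ℕ} (S : List (Fin d) → ℝ) (hS : Grouplike S) (w : List (Fin d)) (n : ℕ) :
    S w ^ (n + 1) = Finsupp.linearCombination ℝ S (spow w n) := by
  induction n with
  | zero => simp [spow]
  | succ n ih =>
    have key : Finsupp.linearCombination ℝ S ∘ₗ
        Finsupp.linearCombination ℝ (fun u => shuffle u w) =
        (LinearMap.mulRight ℝ (S w)) ∘ₗ Finsupp.linearCombination ℝ S := by
      ext u
      simp only [LinearMap.comp_apply, Finsupp.lsingle_apply, Finsupp.linearCombination_single,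
        one_smul, LinearMap.mulRight_apply]
      rw [hS u w, Finsupp.linearCombination_apply]
      rfl
    rw [pow_succ, ih, spow]
    exact (LinearMap.congr_fun key (spow w n)).symm

lemma lc_eq {d N : ℕ} (S : List (Fin d) → ℝ) (a : List (Fin d) →₀ ℝ)
    (ha : ∀ x, a x ≠ 0 → x.length = N) :
    Finsupp.linearCombination ℝ S a =
      ∑ f : Fin N → Fin d, a (List.ofFn f) * S (List.ofFn f) := by
  classical
  have hinj : Function.Injective (fun f : Fin N → Fin d => List.ofFn f) :=
    List.ofFn_injective
  rw [Finsupp.linearCombination_apply, Finsupp.sum]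
  rw [← Finset.sum_image (s := Finset.univ) (g := fun f : Fin N → Fin d => List.ofFn f)
    (f := fun x => a x * S x) hinj.injOn]
  refine Finset.sum_subset ?_ ?_
  · intro x hx
    have hl := ha x (Finsupp.mem_support_iff.1 hx)
    subst hl
    exact Finset.mem_image.2 ⟨x.get, Finset.mem_univ _, List.ofFn_get x⟩
  · intro x _ hx
    simp [Finsupp.notMem_support_iff.1 hx]

end GMB

/-- Moment bound for grouplike random tensor series:
`E ‖S^k‖^{2p} ≤ d^{k(2p−1)} (2p)^{2pk} ‖E S^{2pk}‖`. -/
theorem grouplike_moment_bound {d : ℕ} {Ω : Type*} [MeasurableSpace Ω]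
    (μ : Measure Ω) [IsProbabilityMeasure μ]
    (S : Ω → List (Fin d) → ℝ)
    (hG : ∀ ω, Grouplike (S ω))
    (hint : ∀ w : List (Fin d), Integrable (fun ω => S ω w) μ)
    (p : ℕ) (hp : 1 ≤ p) (k : ℕ) :
    ∫⁻ ω, ENNReal.ofReal (normk d k (S ω) ^ (2 * p)) ∂μ ≤
      ENNReal.ofReal ((d : ℝ) ^ (k * (2 * p - 1)) * ((2 * p : ℕ) : ℝ) ^ (2 * p * k) *
        ∑ f : Fin (2 * p * k) → Fin d, |∫ ω, S ω (List.ofFn f) ∂μ|) := by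
  classical
  obtain ⟨n, hn⟩ : ∃ n, 2 * p = n + 1 := ⟨2 * p - 1, by omega⟩
  have heven : Even (n + 1) := hn ▸ even_two_mul p
  rw [hn, Nat.add_sub_cancel]
  set N := (n + 1) * k with hN
  let A : (Fin k → Fin d) → (Fin N → Fin d) → ℝ :=
    fun g f => GMB.spow (List.ofFn g) n (List.ofFn f)
  have hpow : ∀ ω (g : Fin k → Fin d),
      S ω (List.ofFn g) ^ (n + 1) = ∑ f, A g f * S ω (List.ofFn f) := by
    intro ω g
    rw [GMB.pow_eq (S ω) (hG ω)]
    refine GMB.lc_eq (S ω) _ fun x hx => ?_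
    simpa using GMB.spow_len _ _ x hx
  have hA : ∀ f : Fin N → Fin d, ∑ g, A g f ≤ ((n + 1 : ℕ) : ℝ) ^ N := by
    intro f
    have h := GMB.spow_sum_le n
      (Finset.univ.image fun g : Fin k → Fin d => List.ofFn g) (List.ofFn f)
    rw [Finset.sum_image List.ofFn_injective.injOn] at h
    simpa using h
  let h : Ω → ℝ := fun ω =>
    (d : ℝ) ^ (k * n) * ∑ g : Fin k → Fin d, ∑ f, A g f * S ω (List.ofFn f)
  have hnorm : ∀ ω, normk d k (S ω) ^ (n + 1) ≤ h ω := by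
    intro ω
    have h1 := pow_sum_le_card_mul_sum_pow (s := (Finset.univ : Finset (Fin k → Fin d)))
      (f := fun g => |S ω (List.ofFn g)|) (fun g _ => abs_nonneg _) n
    simp only [heven.pow_abs, hpow, Finset.card_univ, Fintype.card_fun, Fintype.card_fin] at h1
    refine h1.trans (le_of_eq ?_)
    simp only [h]
    push_cast
    rw [pow_mul]
  have hnn : ∀ ω, 0 ≤ h ω := fun ω => (heven.pow_nonneg _).trans (hnorm ω)
  have hint' : Integrable h μ :=
    (integrable_finset_sum _ fun g _ => integrable_finset_sum _ fun f _ =>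
      (hint _).const_mul _).const_mul _
  calc ∫⁻ ω, ENNReal.ofReal (normk d k (S ω) ^ (n + 1)) ∂μ
      ≤ ∫⁻ ω, ENNReal.ofReal (h ω) ∂μ :=
        lintegral_mono fun ω => ENNReal.ofReal_le_ofReal (hnorm ω)
    _ = ENNReal.ofReal (∫ ω, h ω ∂μ) :=
        (ofReal_integral_eq_lintegral_ofReal hint' (Filter.Eventually.of_forall hnn)).symm
    _ ≤ _ := by
        apply ENNReal.ofReal_le_ofReal
        simp only [h]
        rw [integral_const_mul, integral_finset_sum _ fun g _ => integrable_finset_sum _ fun f _ =>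
          (hint _).const_mul _, mul_assoc]
        refine mul_le_mul_of_nonneg_left ?_ (by positivity)
        have h2 : ∀ g : Fin k → Fin d, ∫ ω, ∑ f, A g f * S ω (List.ofFn f) ∂μ =
            ∑ f, A g f * ∫ ω, S ω (List.ofFn f) ∂μ := by
          intro g
          rw [integral_finset_sum _ fun f _ => (hint _).const_mul _]
          simp only [integral_const_mul]
        simp only [h2]
        rw [Finset.sum_comm, Finset.mul_sum]
        refine Finset.sum_le_sum fun f _ => ?_
        rw [← Finset.sum_mul]
        have h0 : 0 ≤ ∑ g, A g f := Finset.sum_nonneg fun g _ => GMB.spow_nonneg _ _ _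
        exact (mul_le_mul_of_nonneg_left (le_abs_self _) h0).trans
          (mul_le_mul_of_nonneg_right (hA f) (abs_nonneg _))
end

section
/- Every word over the alphabet {0,1,…,d} ending in 0, when evaluated on the Itô signature of time-augmented Brownian motion over [0,T], equals the evaluation of some linear combination of words not ending in 0: for every word w there exists ρ in the span of words not ending in 0 with ⟨w0, Ŝ(B̃)_{0,T}⟩ = ⟨ρ, Ŝ(B̃)_{0,T}⟩ almost surely. Hence the quasi-shuffle algebra decomposes as N ⊕ Sh°, where N is the nullspace of the induced bilinear form and Sh° is spanned by words not ending in 0. -/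
open MeasureTheory

/- **Statement 16.**  Setting as for the Itô signature of time-augmented Brownian motion:
`X w t ω` are the Itô signature coordinates indexed by words over `{0,1,…,d}` (`0` the
time letter), satisfying the quasi-shuffle product rule, with the second-moment structure
dictated by Itô calculus.  Conclusions: any word ending in `0` evaluates (a.s.) like a
linear combination of words not ending in `0`; hence the quasi-shuffle algebra decomposes
as `N ⊕ Sh°`, `N` the nullspace of the induced bilinear form and `Sh°` the span of words
not ending in `0`. -/

noncomputable def qsh {d : ℕ} :
    List (Fin (d + 1)) → List (Fin (d + 1)) → (List (Fin (d + 1)) →₀ ℝ)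
  | [], v => Finsupp.single v 1
  | u, [] => Finsupp.single u 1
  | a :: u, b :: v =>
      Finsupp.mapDomain (a :: ·) (qsh u (b :: v)) +
      Finsupp.mapDomain (b :: ·) (qsh (a :: u) v) +
      (if a = b ∧ a ≠ 0 then Finsupp.mapDomain ((0 : Fin (d + 1)) :: ·) (qsh u v) else 0)
termination_by u v => u.length + v.length

noncomputable def itoIP {d : ℕ} (t : ℝ) (u v : List (Fin (d + 1))) : ℝ :=
  (qsh u v).sum fun w c =>
    c * (if ∀ a ∈ w, a = 0 then t ^ w.length / w.length.factorial else 0)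

namespace TZR

open Finsupp

abbrev W (d : ℕ) := List (Fin (d + 1))

variable {d : ℕ}

theorem qsh_nil_left (v : W d) : qsh [] v = single v 1 := by rw [qsh]

theorem qsh_nil_right (v : W d) : qsh v [] = single v 1 := by
  cases v <;> rw [qsh]; simp

noncomputable def cns (a : Fin (d + 1)) : (W d →₀ ℝ) →ₗ[ℝ] (W d →₀ ℝ) :=
  Finsupp.lmapDomain ℝ ℝ (a :: ·)

noncomputable def app (a : Fin (d + 1)) : (W d →₀ ℝ) →ₗ[ℝ] (W d →₀ ℝ) :=
  Finsupp.lmapDomain ℝ ℝ (· ++ [a])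

theorem cns_single (a : Fin (d + 1)) (w : W d) (c : ℝ) :
    cns a (single w c) = single (a :: w) c := by
  simp [cns]

theorem app_single (a : Fin (d + 1)) (w : W d) (c : ℝ) :
    app a (single w c) = single (w ++ [a]) c := by
  simp [app]

theorem app_cns (a b : Fin (d + 1)) (x : W d →₀ ℝ) : app a (cns b x) = cns b (app a x) := by
  have : (app a).comp (cns b) = (cns b).comp (app (d := d) a) := by
    ext w : 2
    simp [cns_single, app_single]
  exact congrArg (fun f => f x) this

theorem qsh_cons (a b : Fin (d + 1)) (u v : W d) : qsh (a :: u) (b :: v) =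
    cns a (qsh u (b :: v)) + cns b (qsh (a :: u) v) +
      (if a = b ∧ a ≠ 0 then cns 0 (qsh u v) else 0) := by
  rw [qsh]; rfl

theorem qsh_app (a b : Fin (d + 1)) : ∀ (u v : W d), qsh (u ++ [a]) (v ++ [b]) =
    app a (qsh u (v ++ [b])) + app b (qsh (u ++ [a]) v) +
      (if a = b ∧ a ≠ 0 then app 0 (qsh u v) else 0)
  | [], [] => by
    simp only [List.nil_append, qsh_cons, qsh_nil_left, qsh_nil_right, app_single, cns_single]
    simp only [List.cons_append, List.nil_append]
    abel
  | [], c :: v => by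
    have ih := qsh_app a b [] v
    simp only [List.nil_append, List.cons_append, qsh_cons, qsh_nil_left, app_single, cns_single,
      map_add, app_cns] at ih ⊢
    rw [ih]
    split_ifs <;>
    simp only [cns_single, map_add, app_single, List.cons_append, map_zero] <;> abel
  | c :: u, [] => by
    have ih := qsh_app a b u []
    simp only [List.nil_append, List.cons_append, qsh_cons, qsh_nil_right, app_single, cns_single,
      map_add, app_cns] at ih ⊢
    rw [ih]
    split_ifs <;>
    simp only [cns_single, map_add, app_single, List.cons_append, map_zero] <;> abel
  | c :: u, e :: v => by
    have ih1 := qsh_app a b u (e :: v)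
    have ih2 := qsh_app a b (c :: u) v
    have ih3 := qsh_app a b u v
    simp only [List.cons_append] at ih1 ih2 ⊢
    rw [qsh_cons c e (u ++ [a]), ih1, ih2, ih3, qsh_cons c e u, qsh_cons c e (u ++ [a]) v,
      qsh_cons c e u v]
    split_ifs <;>
    simp only [app_cns, map_add, map_zero] <;> abel
termination_by u v => u.length + v.length

/-- words not ending in zero -/
noncomputable def Sh0 (d : ℕ) : Submodule ℝ (W d →₀ ℝ) :=
  Finsupp.supported ℝ ℝ {u | u.getLast? ≠ some 0}

theorem mem_Sh0 (x : W d →₀ ℝ) : x ∈ Sh0 d ↔ ∀ u ∈ x.support, u.getLast? ≠ some 0 := by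
  rw [Sh0, Finsupp.mem_supported]; rfl

theorem single_mem_Sh0 (u : W d) (h : u.getLast? ≠ some 0) (c : ℝ) : single u c ∈ Sh0 d :=
  Finsupp.single_mem_supported ℝ _ h

theorem app_mem_Sh0 (a : Fin (d + 1)) (ha : a ≠ 0) (x : W d →₀ ℝ) : app a x ∈ Sh0 d := by
  induction x using Finsupp.induction_linear with
  | zero => simp
  | add f g hf hg => rw [map_add]; exact add_mem hf hg
  | single u c => rw [app_single]; exact single_mem_Sh0 _ (by simpa using ha) _

theorem qsh_zero (v : W d) (hv : v.getLast? ≠ some 0) (k : ℕ) : ∃ τ ∈ Sh0 d,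
    qsh (v ++ List.replicate k 0) [0] =
      ((k : ℝ) + 1) • single (v ++ List.replicate (k + 1) 0) 1 + ((app 0) ^ k) τ := by
  induction k with
  | zero =>
    rcases List.eq_nil_or_concat v with rfl | ⟨v, a, rfl⟩
    · exact ⟨0, zero_mem _, by simp [qsh_nil_left]⟩
    · have ha : a ≠ 0 := by simpa using hv
      refine ⟨app a (qsh v [0]), app_mem_Sh0 a ha _, ?_⟩
      have := qsh_app a 0 v []
      simp only [List.nil_append, qsh_nil_right, app_single] at this
      simp [this, ha]
      abel
  | succ k ih =>
    obtain ⟨τ, hτ, h⟩ := ih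
    refine ⟨τ, hτ, ?_⟩
    have := qsh_app 0 0 (v ++ List.replicate k 0) []
    rw [List.nil_append, h, qsh_nil_right, app_single] at this
    rw [List.replicate_succ', ← List.append_assoc, this]
    rw [List.replicate_succ' (n := k + 1), List.replicate_succ' (n := k)]
    simp only [map_add, map_smul, app_single, pow_succ', Module.End.mul_apply,
      ← List.append_assoc, List.replicate_succ']
    simp
    abel

theorem app_pow_single (k : ℕ) (w : W d) (c : ℝ) :
    ((app 0) ^ k) (single w c) = single (w ++ List.replicate k 0) c := by
  induction k with
  | zero => simp
  | succ k ih =>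
    rw [pow_succ', Module.End.mul_apply, ih, app_single, List.replicate_succ', List.append_assoc]

theorem exists_decomp (w : W d) : ∃ (v : W d) (k : ℕ), v.getLast? ≠ some 0 ∧
    w = v ++ List.replicate k 0 := by
  induction w using List.reverseRecOn with
  | nil => exact ⟨[], 0, by simp, by simp⟩
  | append_singleton w a ih =>
    by_cases ha : a = 0
    · obtain ⟨v, k, hv, rfl⟩ := ih
      exact ⟨v, k + 1, hv, by rw [ha, List.replicate_succ', List.append_assoc]⟩
    · exact ⟨w ++ [a], 0, by simpa using ha, by simp⟩

/-- any submodule containing Sh0 and closed in the appropriate sense is everything -/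
theorem top_of (S : Submodule ℝ (W d →₀ ℝ)) (T : ℝ) (h0 : Sh0 d ≤ S)
    (h : ∀ w : W d, qsh w [0] - T • single w 1 ∈ S) : S = ⊤ := by
  have key : ∀ k : ℕ, ∀ v : W d, v.getLast? ≠ some 0 →
      single (v ++ List.replicate k 0) 1 ∈ S := by
    intro k
    induction k with
    | zero => intro v hv; exact h0 (single_mem_Sh0 _ (by simpa using hv) _)
    | succ k ih =>
      intro v hv
      have hτS : ∀ τ ∈ Sh0 d, ((app 0) ^ k) τ ∈ S := by
        intro τ hτ
        rw [mem_Sh0] at hτ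
        rw [← Finsupp.sum_single τ, Finsupp.sum, map_sum]
        refine Submodule.sum_mem _ fun u hu => ?_
        rw [app_pow_single, ← mul_one (τ u), ← smul_eq_mul, ← Finsupp.smul_single]
        exact S.smul_mem _ (ih u (hτ u hu))
      obtain ⟨τ, hτ, e⟩ := qsh_zero v hv k
      have h1 := h (v ++ List.replicate k 0)
      have h2 := S.add_mem h1 (S.smul_mem T (ih v hv))
      rw [sub_add_cancel, e] at h2
      have h3 := S.sub_mem h2 (hτS τ hτ)
      rw [add_sub_cancel_right] at h3
      exact (S.smul_mem_iff (by positivity)).1 h3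
  rw [eq_top_iff]
  intro x _
  rw [← Finsupp.sum_single x, Finsupp.sum]
  refine Submodule.sum_mem _ fun u _ => ?_
  rw [← mul_one (x u), ← smul_eq_mul, ← Finsupp.smul_single]
  obtain ⟨v, k, hv, rfl⟩ := exists_decomp u
  exact S.smul_mem _ (key k v hv)

noncomputable def eps (t : ℝ) : (W d →₀ ℝ) →ₗ[ℝ] ℝ :=
  Finsupp.linearCombination ℝ
    (fun w : W d => if ∀ a ∈ w, a = 0 then t ^ w.length / w.length.factorial else 0)

theorem itoIP_eq (t : ℝ) (u v : W d) : itoIP t u v = eps t (qsh u v) := by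
  simp only [itoIP, eps, Finsupp.linearCombination_apply, smul_eq_mul]

noncomputable def B (t : ℝ) : (W d →₀ ℝ) →ₗ[ℝ] (W d →₀ ℝ) →ₗ[ℝ] ℝ :=
  Finsupp.linearCombination ℝ (fun u : W d =>
    Finsupp.linearCombination ℝ (fun v : W d => itoIP t u v))

theorem B_single (t : ℝ) (u v : W d) (a b : ℝ) :
    B t (single u a) (single v b) = a * b * eps t (qsh u v) := by
  simp [B, itoIP_eq, mul_assoc]

noncomputable def D (a : Fin (d + 1)) : (W d →₀ ℝ) →ₗ[ℝ] (W d →₀ ℝ) :=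
  Finsupp.lcomapDomain (· ++ [a]) (List.append_left_injective [a])

theorem D_apply (a : Fin (d + 1)) (x : W d →₀ ℝ) (w : W d) : D a x w = x (w ++ [a]) := rfl

theorem D_single_nil (a : Fin (d + 1)) (c : ℝ) : D a (single ([] : W d) c) = 0 := by
  ext w; simp [D_apply, Finsupp.single_apply]

theorem D_single (a b : Fin (d + 1)) (u : W d) (c : ℝ) :
    D a (single (u ++ [b]) c) = if b = a then single u c else 0 := by
  ext w
  rw [D_apply]
  split_ifs with h
  · simp [Finsupp.single_apply, h]
  · simp [Finsupp.single_apply, h]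

theorem eps_app_ne (t : ℝ) (a : Fin (d + 1)) (ha : a ≠ 0) (x : W d →₀ ℝ) :
    eps t (app a x) = 0 := by
  induction x using Finsupp.induction_linear with
  | zero => simp
  | add f g hf hg => rw [map_add, map_add, hf, hg, add_zero]
  | single u c =>
    rw [app_single, eps, Finsupp.linearCombination_single, if_neg, smul_zero]
    intro h
    exact ha (h a (by simp))

theorem hd_congr {f g : ℝ → ℝ} {f' g' t : ℝ} (h : HasDerivAt f f' t) (h1 : ∀ s, g s = f s)
    (h2 : g' = f') : HasDerivAt g g' t := by
  have : g = f := funext h1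
  rw [this, h2]; exact h

theorem eps_app_deriv (t : ℝ) (x : W d →₀ ℝ) :
    HasDerivAt (fun t => eps t (app 0 x)) (eps t x) t := by
  induction x using Finsupp.induction_linear with
  | zero => simpa using hasDerivAt_const t (0 : ℝ)
  | add f g hf hg => exact hd_congr (hf.add hg) (fun s => by simp) (by simp)
  | single u c =>
    simp only [app_single, eps, Finsupp.linearCombination_single]
    by_cases h : ∀ a ∈ u, a = 0
    · have h' : ∀ a ∈ u ++ [0], a = 0 := by
        intro a ha
        rcases List.mem_append.1 ha with ha | ha
        · exact h a ha
        · simpa using ha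
      simp only [if_pos h, if_pos h', List.length_append, List.length_singleton]
      have := (((hasDerivAt_id t).pow (u.length + 1)).div_const
        ((u.length + 1).factorial : ℝ)).const_mul c
      refine hd_congr this (fun s => by simp) ?_
      rw [Nat.factorial_succ]
      have : (u.length.factorial : ℝ) ≠ 0 := by positivity
      push_cast
      simp only [smul_eq_mul, id_eq, Nat.add_sub_cancel, mul_one]
      field_simp
    · have h' : ¬ ∀ a ∈ u ++ [0], a = 0 := fun h' => h fun a ha => h' a (by simp [ha])
      simp only [if_neg h, if_neg h']
      simpa using hasDerivAt_const t (0 : ℝ)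

theorem eps_app_deriv' (t : ℝ) (a : Fin (d + 1)) (x : W d →₀ ℝ) :
    HasDerivAt (fun t => eps t (app a x)) (if a = 0 then eps t x else 0) t := by
  split_ifs with h
  · rw [h]; exact eps_app_deriv t x
  · simp only [eps_app_ne _ a h]; exact hasDerivAt_const t (0 : ℝ)

theorem eps_nil (t : ℝ) : eps t (single ([] : W d) 1) = 1 := by simp [eps]

noncomputable def dB (t : ℝ) (x y : W d →₀ ℝ) : ℝ :=
  B t (D 0 x) y + B t x (D 0 y) + ∑ a : Fin (d + 1), if a ≠ 0 then B t (D a x) (D a y) else 0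

theorem sum_ite_aux (p q : Fin (d + 1)) (z : ℝ) :
    (∑ a : Fin (d + 1), if a ≠ 0 then (if p = a then (if q = a then z else 0) else 0) else 0) =
      if p = q ∧ p ≠ 0 then z else 0 := by
  rw [Finset.sum_eq_single p]
  · by_cases h : p = q
    · subst h; simp
    · simp [h, Ne.symm h]
  · intro b _ hb; simp [Ne.symm hb]
  · simp

theorem B_deriv (t : ℝ) (x y : W d →₀ ℝ) :
    HasDerivAt (fun t => B t x y) (dB t x y) t := by
  induction x using Finsupp.induction_linear with
  | zero => simpa [dB] using hasDerivAt_const t (0 : ℝ)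
  | add f g hf hg =>
    have := hf.add hg
    simp only [map_add, LinearMap.add_apply]
    refine hd_congr this (fun s => by simp) ?_
    simp only [dB, map_add, LinearMap.add_apply, ← Finset.sum_filter, Finset.sum_add_distrib]
    ring
  | single u c =>
  induction y using Finsupp.induction_linear with
  | zero => simpa [dB] using hasDerivAt_const t (0 : ℝ)
  | add f g hf hg =>
    have := hf.add hg
    simp only [map_add]
    refine hd_congr this (fun s => by simp) ?_
    simp only [dB, map_add, ← Finset.sum_filter, Finset.sum_add_distrib]
    ring
  | single v e =>
  simp only [B_single]
  rcases List.eq_nil_or_concat' u with rfl | ⟨u, a, rfl⟩ <;>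
    rcases List.eq_nil_or_concat' v with rfl | ⟨v, b, rfl⟩
  · simp only [qsh_nil_left, eps_nil, dB, D_single_nil]
    simpa using hasDerivAt_const t (c * e)
  · have := (eps_app_deriv' t b (single v 1)).const_mul (c * e)
    simp only [app_single] at this
    simp only [qsh_nil_left]
    refine hd_congr this (fun s => by simp) ?_
    simp only [dB, D_single_nil, D_single]
    split_ifs <;> simp [B_single, qsh_nil_left]
  · have := (eps_app_deriv' t a (single u 1)).const_mul (c * e)
    simp only [app_single] at this
    simp only [qsh_nil_right]
    refine hd_congr this (fun s => by simp) ?_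
    simp only [dB, D_single_nil, D_single]
    split_ifs <;> simp [B_single, qsh_nil_right]
  · have h1 := eps_app_deriv' t a (qsh u (v ++ [b]))
    have h2 := eps_app_deriv' t b (qsh (u ++ [a]) v)
    have h3 : HasDerivAt (fun t => eps t (if a = b ∧ a ≠ 0 then app 0 (qsh u v) else 0))
        (if a = b ∧ a ≠ 0 then eps t (qsh u v) else 0) t := by
      split_ifs
      · exact eps_app_deriv t _
      · simpa using hasDerivAt_const t (0 : ℝ)
    have := ((h1.add h2).add h3).const_mul (c * e)
    simp only [qsh_app, map_add]
    refine hd_congr this (fun s => by simp) ?_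
    simp only [dB, D_single]
    have e3 : ∀ i : Fin (d + 1), (B t (if a = i then single u c else 0))
        (if b = i then single v e else 0) =
        if a = i then (if b = i then c * e * eps t (qsh u v) else 0) else 0 := by
      intro i
      split_ifs <;> simp [B_single]
    simp only [e3, sum_ite_aux]
    split_ifs <;> simp [B_single] <;> ring

theorem B_zero (x y : W d →₀ ℝ) : B 0 x y = x [] * y [] := by
  induction x using Finsupp.induction_linear with
  | zero => simp
  | add f g hf hg => simp [hf, hg, add_mul]
  | single u c =>
  induction y using Finsupp.induction_linear with
  | zero => simp
  | add f g hf hg => simp only [map_add, hf, hg, Finsupp.add_apply, mul_add]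
  | single v e =>
  have e0 : ∀ (a : Fin (d + 1)) (x : W d →₀ ℝ), eps 0 (app a x) = 0 := by
    intro a x
    induction x using Finsupp.induction_linear with
    | zero => simp
    | add f g hf hg => rw [map_add, map_add, hf, hg, add_zero]
    | single u c => simp [app_single, eps, Finsupp.linearCombination_single]
  rw [B_single]
  rcases List.eq_nil_or_concat' u with rfl | ⟨u, a, rfl⟩ <;>
    rcases List.eq_nil_or_concat' v with rfl | ⟨v, b, rfl⟩
  · simp [qsh_nil_left, eps_nil]
  · rw [qsh_nil_left, ← app_single, e0]; simp
  · rw [qsh_nil_right, ← app_single, e0]; simp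
  · rw [qsh_app, map_add, map_add, e0, e0]
    split_ifs <;> simp [e0]

theorem deriv_zero_of {f : ℝ → ℝ} {f' T t : ℝ} (hT : 0 < T) (ht : t ∈ Set.Icc 0 T)
    (h : ∀ s ∈ Set.Icc 0 T, f s = 0) (hf : HasDerivAt f f' t) : f' = 0 := by
  have h1 : HasDerivWithinAt f f' (Set.Icc 0 T) t := hf.hasDerivWithinAt
  have h2 : HasDerivWithinAt f 0 (Set.Icc 0 T) t :=
    (hasDerivWithinAt_const t (Set.Icc 0 T) (0 : ℝ)).congr h (h t ht)
  exact (uniqueDiffOn_Icc hT t ht).eq_deriv _ h1 h2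

theorem eq_zero_of_D (x : W d →₀ ℝ) (h0 : x [] = 0) (h : ∀ a, D a x = 0) : x = 0 := by
  ext w
  rcases List.eq_nil_or_concat' w with rfl | ⟨u, a, rfl⟩
  · exact h0
  · rw [← D_apply, h a]; rfl

theorem nondeg (T : ℝ) (hT : 0 < T)
    (hpos : ∀ t ∈ Set.Icc 0 T, ∀ x : W d →₀ ℝ, 0 ≤ B t x x)
    (hcs : ∀ t ∈ Set.Icc 0 T, ∀ x y : W d →₀ ℝ, B t x x = 0 → B t x y = 0 ∧ B t y x = 0)
    (n : ℕ) : ∀ x : W d →₀ ℝ, (∀ u ∈ x.support, u.length < n) →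
      (∀ t ∈ Set.Icc 0 T, B t x x = 0) → x = 0 := by
  induction n with
  | zero =>
    intro x hx _
    ext u
    by_contra h
    exact absurd (hx u (by simpa using h)) (by simp)
  | succ n ih =>
    intro x hx h
    have hlen : ∀ a, ∀ u ∈ (D a x).support, u.length < n := by
      intro a u hu
      have := hx (u ++ [a]) (by simpa [D_apply] using hu)
      simpa using this
    have h0 : x [] = 0 := by
      have := h 0 ⟨le_rfl, hT.le⟩
      rw [B_zero] at this
      exact mul_self_eq_zero.1 this
    have hne : ∀ a, a ≠ 0 → D a x = 0 := by
      intro a ha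
      refine ih _ (hlen a) fun t ht => ?_
      have h1 := deriv_zero_of hT ht h (B_deriv t x x)
      rw [dB, (hcs t ht x (D 0 x) (h t ht)).1, (hcs t ht x (D 0 x) (h t ht)).2, zero_add,
        zero_add, Finset.sum_eq_zero_iff_of_nonneg] at h1
      · simpa [ha] using h1 a (Finset.mem_univ a)
      · intro i _
        split_ifs
        · exact hpos t ht _
        · exact le_rfl
    refine eq_zero_of_D x h0 fun a => ?_
    by_cases ha : a = 0
    · subst ha
      refine ih _ (hlen 0) fun t ht => ?_
      have h1 := deriv_zero_of hT ht (fun s hs => (hcs s hs x (D 0 x) (h s hs)).1)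
        (B_deriv t x (D 0 x))
      rw [dB, (hcs t ht x (D 0 (D 0 x)) (h t ht)).1, add_zero, Finset.sum_eq_zero, add_zero] at h1
      · exact h1
      · intro i _
        split_ifs with hi
        · rw [hne i hi]; simp
        · rfl
    · exact hne a ha

theorem nondeg_T (T : ℝ) (hT : 0 < T)
    (hpos : ∀ t ∈ Set.Icc 0 T, ∀ x : W d →₀ ℝ, 0 ≤ B t x x)
    (hcs : ∀ t ∈ Set.Icc 0 T, ∀ x y : W d →₀ ℝ, B t x x = 0 → B t x y = 0 ∧ B t y x = 0)
    (x : W d →₀ ℝ) (hx : x ∈ Sh0 d) (h : B T x x = 0) : x = 0 := by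
  have hD : D 0 x = 0 := by
    ext u
    rw [D_apply]
    by_contra hu
    exact (mem_Sh0 x).1 hx (u ++ [0]) (by simpa using hu) (by simp)
  have hmono : MonotoneOn (fun t => B t x x) (Set.Icc 0 T) := by
    refine monotoneOn_of_hasDerivWithinAt_nonneg (f' := fun t => dB t x x) (convex_Icc 0 T)
      (fun t _ => (B_deriv t x x).continuousAt.continuousWithinAt)
      (fun t _ => (B_deriv t x x).hasDerivWithinAt) ?_
    intro t ht
    have ht' := interior_subset ht
    simp only [dB, hD, map_zero, LinearMap.zero_apply, zero_add]
    refine Finset.sum_nonneg fun i _ => ?_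
    split_ifs
    · exact hpos t ht' _
    · exact le_rfl
  refine nondeg T hT hpos hcs (x.support.sup List.length + 1) x
    (fun u hu => Nat.lt_succ_of_le (Finset.le_sup (f := List.length) hu)) fun t ht => ?_
  refine le_antisymm ?_ (hpos t ht x)
  rw [← h]
  exact hmono ht ⟨hT.le, le_rfl⟩ ht.2

end TZR

theorem trailing_zero_reduction
    {Ω : Type*} {mΩ : MeasurableSpace Ω} (μ : Measure Ω) [IsProbabilityMeasure μ]
    (d : ℕ) (T : ℝ) (hT : 0 < T)
    (X : List (Fin (d + 1)) → ℝ → Ω → ℝ)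
    (h_empty : ∀ (t : ℝ) (ω : Ω), X [] t ω = 1)
    (h_time : ∀ (w : List (Fin (d + 1))) (t : ℝ) (ω : Ω),
      X (w ++ [0]) t ω = ∫ s in (0 : ℝ)..t, X w s ω)
    (h_qsh : ∀ (u v : List (Fin (d + 1))) (t : ℝ), ∀ᵐ ω ∂μ,
      X u t ω * X v t ω = (qsh u v).sum fun w c => c * X w t ω)
    (h_int : ∀ (u v : List (Fin (d + 1))) (t : ℝ),
      Integrable (fun ω => X u t ω * X v t ω) μ)
    (h_ip : ∀ (u v : List (Fin (d + 1))) (t : ℝ), t ∈ Set.Icc 0 T →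
      ∫ ω, X u t ω * X v t ω ∂μ = itoIP t u v) :
    -- every word ending in `0` is, on the signature, a combination of words not ending
    -- in `0`
    (∀ w : List (Fin (d + 1)), ∃ ρ : List (Fin (d + 1)) →₀ ℝ,
      (∀ u ∈ ρ.support, u.getLast? ≠ some 0) ∧
      ∀ᵐ ω ∂μ, X (w ++ [0]) T ω = ρ.sum fun u c => c * X u T ω) ∧
    -- decomposition `Sh = N ⊕ Sh°`: every `σ` differs from a unique combination of
    -- words not ending in `0` by an element of the nullspace
    (∀ σ : List (Fin (d + 1)) →₀ ℝ, ∃! ρ : List (Fin (d + 1)) →₀ ℝ,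
      (∀ u ∈ ρ.support, u.getLast? ≠ some 0) ∧
      ∫ ω, ((σ.sum fun w c => c * X w T ω) - ρ.sum fun u c => c * X u T ω) ^ 2 ∂μ = 0) := by
  classical
  -- evaluation
  let ev : ℝ → Ω → (List (Fin (d + 1)) →₀ ℝ) →ₗ[ℝ] ℝ := fun t ω =>
    Finsupp.linearCombination ℝ (fun w => X w t ω)
  have hev : ∀ t ω (x : List (Fin (d + 1)) →₀ ℝ), (x.sum fun w c => c * X w t ω) = ev t ω x := by
    intro t ω x
    simp only [ev, Finsupp.linearCombination_apply, smul_eq_mul]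
  have hBint : ∀ t (x y : List (Fin (d + 1)) →₀ ℝ),
      Integrable (fun ω => ev t ω x * ev t ω y) μ := by
    intro t x y
    induction x using Finsupp.induction_linear with
    | zero => simp
    | add f g hf hg => 
      simp only [map_add, add_mul]
      exact hf.add hg
    | single u c =>
    induction y using Finsupp.induction_linear with
    | zero => simp
    | add f g hf hg => 
      simp only [map_add, mul_add]
      exact hf.add hg
    | single v e =>
    have := (h_int u v t).const_mul (c * e)
    refine this.congr (Filter.Eventually.of_forall fun ω => ?_)
    simp only [ev, Finsupp.linearCombination_single, smul_eq_mul]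
    ring
  have hB : ∀ t ∈ Set.Icc 0 T, ∀ (x y : List (Fin (d + 1)) →₀ ℝ),
      ∫ ω, ev t ω x * ev t ω y ∂μ = TZR.B t x y := by
    intro t ht x y
    induction x using Finsupp.induction_linear with
    | zero => simp
    | add f g hf hg =>
      simp only [map_add, add_mul, LinearMap.add_apply]
      rw [integral_add (hBint t f y) (hBint t g y), hf, hg]
    | single u c =>
    induction y using Finsupp.induction_linear with
    | zero => simp
    | add f g hf hg =>
      simp only [map_add, mul_add]
      rw [integral_add (hBint t _ f) (hBint t _ g), hf, hg]
    | single v e =>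
    rw [TZR.B_single, ← TZR.itoIP_eq, ← h_ip u v t ht, ← integral_const_mul]
    congr 1
    ext ω
    simp only [ev, Finsupp.linearCombination_single, smul_eq_mul]
    ring
  have hnull : ∀ t (x : List (Fin (d + 1)) →₀ ℝ), ∫ ω, ev t ω x * ev t ω x ∂μ = 0 ↔
      ∀ᵐ ω ∂μ, ev t ω x = 0 := by
    intro t x
    rw [integral_eq_zero_iff_of_nonneg (fun ω => mul_self_nonneg _) (hBint t x x)]
    constructor
    · intro h
      filter_upwards [h] with ω hω
      exact mul_self_eq_zero.1 hω
    · intro h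
      filter_upwards [h] with ω hω
      simp [hω]
  have hpos : ∀ t ∈ Set.Icc 0 T, ∀ x : List (Fin (d + 1)) →₀ ℝ, 0 ≤ TZR.B t x x := by
    intro t ht x
    rw [← hB t ht]
    exact integral_nonneg fun ω => mul_self_nonneg _
  have hcs : ∀ t ∈ Set.Icc 0 T, ∀ x y : List (Fin (d + 1)) →₀ ℝ, TZR.B t x x = 0 →
      TZR.B t x y = 0 ∧ TZR.B t y x = 0 := by
    intro t ht x y h
    rw [← hB t ht, hnull] at h
    rw [← hB t ht, ← hB t ht]
    constructor
    · refine integral_eq_zero_of_ae ?_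
      filter_upwards [h] with ω hω
      simp [hω]
    · refine integral_eq_zero_of_ae ?_
      filter_upwards [h] with ω hω
      simp [hω]
  let Z : Submodule ℝ (List (Fin (d + 1)) →₀ ℝ) :=
    { carrier := {x | ∀ᵐ ω ∂μ, ev T ω x = 0}
      add_mem' := by
        intro x y hx hy
        change ∀ᵐ ω ∂μ, ev T ω _ = 0
        filter_upwards [hx, hy] with ω h1 h2
        rw [map_add, h1, h2, add_zero]
      zero_mem' := by simp
      smul_mem' := by
        intro c x hx
        change ∀ᵐ ω ∂μ, ev T ω _ = 0
        filter_upwards [hx] with ω h1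
        rw [map_smul, h1, smul_zero] }
  have htop : TZR.Sh0 d ⊔ Z = ⊤ := by
    refine TZR.top_of _ T le_sup_left fun w => ?_
    refine Submodule.mem_sup_right ?_
    change ∀ᵐ ω ∂μ, ev T ω _ = 0
    filter_upwards [h_qsh w [0] T] with ω hω
    have h1 : X [0] T ω = T := by
      have := h_time [] T ω
      simpa [h_empty] using this
    rw [hev, h1] at hω
    rw [map_sub, ← hω, map_smul]
    simp only [ev, Finsupp.linearCombination_single, smul_eq_mul]
    ring
  have hex : ∀ x : List (Fin (d + 1)) →₀ ℝ, ∃ ρ ∈ TZR.Sh0 d, ∀ᵐ ω ∂μ, ev T ω x = ev T ω ρ := by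
    intro x
    have hx : x ∈ TZR.Sh0 d ⊔ Z := by rw [htop]; trivial
    obtain ⟨ρ, hρ, z, hz, rfl⟩ := Submodule.mem_sup.1 hx
    refine ⟨ρ, hρ, ?_⟩
    filter_upwards [hz] with ω hω
    rw [map_add, hω, add_zero]
  have hiff : ∀ x y : List (Fin (d + 1)) →₀ ℝ,
      ∫ ω, (ev T ω x - ev T ω y) ^ 2 ∂μ = 0 ↔ ∀ᵐ ω ∂μ, ev T ω x = ev T ω y := by
    intro x y
    have := hnull T (x - y)
    simp only [map_sub, sub_eq_zero] at this
    simpa only [sq] using this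
  simp only [hev]
  refine ⟨fun w => ?_, fun σ => ?_⟩
  · obtain ⟨ρ, hρ, h⟩ := hex (Finsupp.single (w ++ [0]) 1)
    refine ⟨ρ, (TZR.mem_Sh0 ρ).1 hρ, ?_⟩
    filter_upwards [h] with ω hω
    rw [← hω]
    simp [ev]
  · obtain ⟨ρ, hρ, h⟩ := hex σ
    refine ⟨ρ, ⟨(TZR.mem_Sh0 ρ).1 hρ, (hiff σ ρ).2 h⟩, ?_⟩
    rintro ρ' ⟨h1, h2⟩
    rw [hiff] at h2
    have hTm : T ∈ Set.Icc 0 T := ⟨hT.le, le_rfl⟩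
    refine sub_eq_zero.1 (TZR.nondeg_T T hT hpos hcs (ρ' - ρ)
      (sub_mem ((TZR.mem_Sh0 ρ').2 h1) hρ) ?_)
    rw [← hB T hTm, hnull]
    filter_upwards [h, h2] with ω a b
    rw [map_sub, ← a, ← b, sub_self]
end
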